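/- arXiv:1402.2500 — 2 statements merged into one kernel-verified Lean document; each statement's English description precedes it below -/
import Mathlib

section
/- Let (W,T) be a dual Coxeter system of finite rank m and let c = s1⋯sn be a parabolic Coxeter element (so s1,…,sn are the first n elements of some simple system for (W,T)). Then the Hurwitz action of the braid group B_n on Red_T(c) is transitive: for every tuple (t1,…,tn) ∈ T^n with c = t1⋯tn there exists a braid b ∈ B_n such that b·(t1,…,tn) = (s1,…,sn). -/
/-- The Hurwitz move `σᵢ` on tuples of group elements (represented as lists):
`(t₁, …, a, b, …, tₙ) ↦ (t₁, …, a b a, a, …, tₙ)` (recall that reflections are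
involutions, so `a b a = a b a⁻¹`). -/
def HurwitzMove {W : Type*} [Group W] (l l' : List W) : Prop :=
  ∃ (l₁ l₂ : List W) (a b : W),
    l = l₁ ++ [a, b] ++ l₂ ∧ l' = l₁ ++ [a * b * a, a] ++ l₂

namespace CoxeterMatrix

variable {B : Type*} (M : CoxeterMatrix B)

/-- The row of the Cartan matrix `-2 cos (π / M i j)` indexed by `i`. -/
noncomputable def cartanRow (i : B) : B → ℝ := fun j => -2 * Real.cos (Real.pi / M i j)

theorem proj_cartanRow_self (i : B) :
    (LinearMap.proj i : (B → ℝ) →ₗ[ℝ] ℝ) (M.cartanRow i) = 2 := by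
  simp [cartanRow]

/-- The simple reflections of the contragredient geometric representation, in the coordinates
given by the fundamental weights. -/
noncomputable def dualReflection (i : B) : (B → ℝ) ≃ₗ[ℝ] (B → ℝ) :=
  Module.reflection (M.proj_cartanRow_self i)

theorem dualReflection_apply (i : B) (v : B → ℝ) :
    M.dualReflection i v = v - v i • M.cartanRow i :=
  Module.reflection_apply _ _

open Polynomial.Chebyshev in
theorem eval_S_two_mul_cos_mul_sin (n : ℤ) (θ : ℝ) :
    (S ℝ n).eval (2 * Real.cos θ) * Real.sin θ = Real.sin ((n + 1) * θ) := by
  rw [← U_real_cos, ← S_comp_two_mul_X]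
  simp

theorem isLiftable_dualReflection : M.IsLiftable M.dualReflection := by
  intro i j
  obtain rfl | hij := eq_or_ne i j
  · ext1 v
    simpa [dualReflection] using Module.involutive_reflection (M.proj_cartanRow_self i) v
  have h1 : M i j ≠ 1 := M.off_diagonal i j hij
  have hsymm : M j i = M i j := M.symmetric j i
  obtain h0 | h0 := eq_or_ne (M i j) 0
  · simp [h0]
  obtain h2 | h2 := eq_or_ne (M i j) 2
  · have e1 : M.cartanRow i j = 0 := by simp [cartanRow, h2]
    have e2 : M.cartanRow j i = 0 := by simp [cartanRow, h2, hsymm]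
    have e3 : M.cartanRow i i = 2 := M.proj_cartanRow_self i
    have e4 : M.cartanRow j j = 2 := M.proj_cartanRow_self j
    ext1 v
    rw [h2, pow_two]
    simp only [LinearEquiv.mul_apply, dualReflection_apply, LinearEquiv.coe_one, id_eq,
      Pi.sub_apply, Pi.smul_apply, smul_eq_mul, e1, e2, e3, e4]
    module
  set m := M i j with hm
  have hm3 : 3 ≤ m := by omega
  set θ : ℝ := 2 * Real.pi / m with hθ
  have hmpos : (0 : ℝ) < m := by positivity
  have hsin : Real.sin θ ≠ 0 := by
    apply ne_of_gt
    apply Real.sin_pos_of_pos_of_lt_pi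
    · positivity
    · rw [hθ, div_lt_iff₀ hmpos]
      have : (3 : ℝ) ≤ m := by exact_mod_cast hm3
      nlinarith [Real.pi_pos]
  ext1 v
  have key := Module.reflection_mul_reflection_pow_apply (M.proj_cartanRow_self i)
    (M.proj_cartanRow_self j) m v (2 * Real.cos θ) (by
      simp only [LinearMap.proj_apply, cartanRow, hsymm, ← hm]
      rw [hθ, mul_div_assoc, Real.cos_two_mul]
      ring)
  change _ = v
  refine key.trans ?_
  obtain ⟨k, hk | hk⟩ := Nat.even_or_odd' m
  · have e1 : ((m : ℤ) - 2) / 2 = k - 1 := by omega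
    have e2 : ((m : ℤ) - 1) / 2 = k - 1 := by omega
    have hS : (Polynomial.Chebyshev.S ℝ (k - 1)).eval (2 * Real.cos θ) = 0 := by
      refine (mul_eq_zero.1 ?_).resolve_right hsin
      rw [eval_S_two_mul_cos_mul_sin, ← Real.sin_pi]
      congr 1
      have : (m : ℝ) = 2 * k := by exact_mod_cast hk
      rw [hθ]
      field_simp
      push_cast
      linarith
    rw [e1, e2, hS]
    simp
  · have e1 : ((m : ℤ) - 2) / 2 = k - 1 := by omega
    have e2 : ((m : ℤ) - 1) / 2 = k := by omega
    have e3 : ((m : ℤ) - 3) / 2 = k - 1 := by omega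
    have e4 : (m : ℤ) / 2 = k := by omega
    have hS : (Polynomial.Chebyshev.S ℝ k).eval (2 * Real.cos θ) +
        (Polynomial.Chebyshev.S ℝ (k - 1)).eval (2 * Real.cos θ) = 0 := by
      refine (mul_eq_zero.1 ?_).resolve_right hsin
      rw [add_mul, eval_S_two_mul_cos_mul_sin, eval_S_two_mul_cos_mul_sin]
      have hmk : (m : ℝ) = 2 * k + 1 := by exact_mod_cast hk
      have : (((k : ℤ) - 1 : ℤ) + 1 : ℝ) * θ = 2 * Real.pi - (((k : ℤ) : ℝ) + 1) * θ := by
        rw [hθ]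
        field_simp
        push_cast
        linarith
      rw [this, Real.sin_two_pi_sub]
      ring
    rw [e1, e2, e3, e4, hS]
    simp

end CoxeterMatrix

namespace CoxeterSystem

variable {B W : Type*} [Group W] {M : CoxeterMatrix B} (cs : CoxeterSystem M W)

/-- A nonempty product of distinct simple reflections is nontrivial. -/
theorem wordProd_ne_one_of_nodup {ω : List B} (hω : ω.Nodup) (hne : ω ≠ []) :
    cs.wordProd ω ≠ 1 := by
  classical
  obtain _ | ⟨i, ω⟩ := ω
  · contradiction
  set ρ := cs.lift ⟨_, M.isLiftable_dualReflection⟩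
  have hρ (j : B) : ρ (cs.simple j) = M.dualReflection j := cs.lift_apply_simple _ j
  have hfix (ω : List B) (hi : i ∉ ω) : ρ (cs.wordProd ω) (Pi.single i 1) = Pi.single i 1 := by
    induction ω with
    | nil => simp
    | cons j ω ih =>
      rw [List.mem_cons, not_or] at hi
      rw [wordProd_cons, map_mul, LinearEquiv.mul_apply, ih hi.2, hρ,
        CoxeterMatrix.dualReflection_apply]
      simp [Pi.single_eq_of_ne (Ne.symm hi.1)]
  intro h
  have h1 : ρ (cs.wordProd (i :: ω)) (Pi.single i 1) = Pi.single i 1 := by simp [h]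
  rw [wordProd_cons, map_mul, LinearEquiv.mul_apply, hfix ω (List.nodup_cons.1 hω).1, hρ,
    CoxeterMatrix.dualReflection_apply] at h1
  have h2 := congrFun h1 i
  simp [CoxeterMatrix.cartanRow] at h2

end CoxeterSystem

namespace CoxeterSystem

variable {B W : Type*} [Group W] {M : CoxeterMatrix B} (cs : CoxeterSystem M W)

open Classical in
/-- The action of a simple reflection `s` on signed group elements: conjugation by `s`, with a
change of sign exactly at `s`. -/
noncomputable def signedConj (i : B) : Function.End (W × ZMod 2) := fun p =>
  (cs.simple i * p.1 * cs.simple i, p.2 + if p.1 = cs.simple i then 1 else 0)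

open Classical in
theorem signedConj_mul_pow_apply (i j : B) (k : ℕ) (t : W) (ε : ZMod 2) :
    ((cs.signedConj i * cs.signedConj j) ^ k) (t, ε) =
      ((cs.simple i * cs.simple j) ^ k * t * ((cs.simple i * cs.simple j) ^ k)⁻¹,
        ε + ∑ n ∈ Finset.range (2 * k),
          if t = ((cs.simple i * cs.simple j)⁻¹) ^ n * cs.simple j then 1 else 0) := by
  induction k with
  | zero => simp; rfl
  | succ k ih =>
    set p := cs.simple i * cs.simple j with hp
    have hsemi : cs.simple j * p ^ k = p⁻¹ ^ k * cs.simple j := by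
      have h : SemiconjBy (cs.simple j) p p⁻¹ := by simp [SemiconjBy, hp, mul_assoc]
      exact (h.pow_right k).eq
    have hconj (u : W) : p ^ k * t * (p ^ k)⁻¹ = u ↔ t = p⁻¹ ^ k * u * p ^ k := by
      rw [inv_pow]
      constructor
      · rintro rfl; group
      · rintro rfl; group
    have h1 : p ^ k * t * (p ^ k)⁻¹ = cs.simple j ↔ t = p⁻¹ ^ (2 * k) * cs.simple j := by
      rw [hconj, mul_assoc, hsemi, ← mul_assoc, ← pow_add, two_mul]
    have h2 : cs.simple j * (p ^ k * t * (p ^ k)⁻¹) * cs.simple j = cs.simple i ↔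
        t = p⁻¹ ^ (2 * k + 1) * cs.simple j := by
      have : cs.simple j * (p ^ k * t * (p ^ k)⁻¹) * cs.simple j = cs.simple i ↔
          p ^ k * t * (p ^ k)⁻¹ = p⁻¹ * cs.simple j := by
        have hp' : p⁻¹ * cs.simple j = cs.simple j * cs.simple i * cs.simple j := by simp [hp]
        rw [hp']
        constructor
        · intro h
          rw [← h]
          simp [mul_assoc]
        · intro h
          rw [h]
          simp [mul_assoc]
      rw [this, hconj, mul_assoc, mul_assoc, hsemi, ← mul_assoc, ← mul_assoc, ← pow_succ,
        ← pow_add]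
      congr! 3
      omega
    rw [pow_succ']
    change cs.signedConj i (cs.signedConj j (((cs.signedConj i * cs.signedConj j) ^ k) (t, ε))) = _
    rw [ih]
    simp only [signedConj, h1, h2]
    refine Prod.ext ?_ ?_
    · simp only [pow_succ', mul_inv_rev, hp, inv_simple]
      simp only [mul_assoc]
    · change _ = ε + ∑ n ∈ Finset.range (2 * k + 1 + 1), _
      rw [Finset.sum_range_succ, Finset.sum_range_succ]
      ring

theorem isLiftable_signedConj : M.IsLiftable cs.signedConj := by
  classical
  intro i j
  funext ⟨t, ε⟩
  rw [signedConj_mul_pow_apply, simple_mul_simple_pow, two_mul, Finset.sum_range_add]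
  have h (n : ℕ) : ((cs.simple i * cs.simple j)⁻¹) ^ (M i j + n) =
      ((cs.simple i * cs.simple j)⁻¹) ^ n := by
    rw [pow_add, inv_pow, simple_mul_simple_pow, inv_one, one_mul]
  simp only [h, CharTwo.add_self_eq_zero]
  simp
  rfl

/-- The action of `W` on signed group elements. -/
noncomputable def signedConjHom : W →* Function.End (W × ZMod 2) :=
  cs.lift ⟨cs.signedConj, cs.isLiftable_signedConj⟩

/-- The reflection cocycle: `cs.inversionParity w t` is the parity of the number of occurrences of
`t` in the right inversion sequence of any word for `w`. -/
noncomputable def inversionParity (w t : W) : ZMod 2 :=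
  (cs.signedConjHom w (t, 0)).2

theorem signedConjHom_apply (w t : W) (ε : ZMod 2) :
    cs.signedConjHom w (t, ε) =
      (w * t * w⁻¹, ε + cs.inversionParity w t) := by
  unfold inversionParity
  induction w using cs.simple_induction_left generalizing ε with
  | one =>
    rw [map_one]
    exact Prod.ext (by simp; rfl) (add_zero ε).symm
  | mul_simple_left w i ih =>
    have h (ε : ZMod 2) : cs.signedConjHom (cs.simple i * w) (t, ε) =
        cs.signedConj i (cs.signedConjHom w (t, ε)) := by
      rw [map_mul, signedConjHom, lift_apply_simple]
      rfl
    rw [h, h, ih, ih 0]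
    simp [signedConj, mul_assoc, add_assoc]

theorem inversionParity_mul (x y t : W) :
    cs.inversionParity (x * y) t =
      cs.inversionParity y t + cs.inversionParity x (y * t * y⁻¹) := by
  have h := congrArg Prod.snd (cs.signedConjHom_apply (x * y) t 0)
  rw [map_mul] at h
  change (cs.signedConjHom x (cs.signedConjHom y (t, 0))).2 = _ at h
  rw [signedConjHom_apply, signedConjHom_apply] at h
  simpa using h.symm

@[simp]
theorem inversionParity_one (t : W) : cs.inversionParity 1 t = 0 := by
  rw [inversionParity, map_one]
  rfl

open Classical in
theorem inversionParity_simple (i : B) (t : W) :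
    cs.inversionParity (cs.simple i) t = if t = cs.simple i then 1 else 0 := by
  rw [inversionParity, signedConjHom, lift_apply_simple]
  simp [signedConj]

variable {cs} in
theorem IsReflection.inversionParity_self {t : W} (ht : cs.IsReflection t) :
    cs.inversionParity t t = 1 := by
  obtain ⟨u, i, rfl⟩ := ht
  have h := cs.inversionParity_mul u u⁻¹ (u * cs.simple i * u⁻¹)
  rw [mul_inv_cancel, inversionParity_one] at h
  have e1 : u⁻¹ * (u * cs.simple i * u⁻¹) * u⁻¹⁻¹ = cs.simple i := by group
  have e2 : cs.simple i * cs.simple i * (cs.simple i)⁻¹ = cs.simple i := by group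
  rw [e1] at h
  rw [inversionParity_mul, inversionParity_mul, e1, e2, inversionParity_simple, if_pos rfl]
  linear_combination -h

/-- The exchange property for words in the canonical generators of a set `R` of reflections which
is closed under conjugation: the letters of `L` have no inversions in `R` but themselves. -/
theorem exists_prod_mul_eq_of_inversionParity_eq_one {R : Set W} (hsq : ∀ a ∈ R, a * a = 1)
    (hR : ∀ a ∈ R, ∀ b ∈ R, a * b * a ∈ R) {L : List W}
    (hL : ∀ a ∈ L, a ∈ R ∧ ∀ b ∈ R, cs.inversionParity a b = 1 → b = a) {r : W} (hr : r ∈ R)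
    (h : cs.inversionParity L.prod r = 1) :
    ∃ L₁ a L₂, L = L₁ ++ a :: L₂ ∧ L.prod * r = (L₁ ++ L₂).prod := by
  induction L using List.reverseRecOn generalizing r with
  | nil => simp at h
  | append_singleton L a ih =>
    obtain ⟨haR, ha⟩ := hL a (by simp)
    have hinv : a⁻¹ = a := inv_eq_of_mul_eq_one_left (hsq a haR)
    by_cases hra : r = a
    · subst hra
      exact ⟨L, r, [], rfl, by simp [mul_assoc, hsq r hr]⟩
    · rw [List.prod_append, List.prod_singleton, inversionParity_mul, hinv] at h
      have h0 : cs.inversionParity a r = 0 := by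
        replace hra := mt (ha r hr) hra
        generalize cs.inversionParity a r = z at hra
        revert z; decide
      rw [h0, zero_add] at h
      obtain ⟨L₁, b, L₂, rfl, h'⟩ := ih (fun b hb => hL b (by simp [hb])) (hR a haR r hr) h
      refine ⟨L₁, b, L₂ ++ [a], by simp, ?_⟩
      rw [← List.append_assoc, List.prod_append (l₁ := L₁ ++ L₂), ← h', List.prod_append,
        List.prod_singleton]
      simp only [mul_assoc, hsq a haR, mul_one]

/-- The strong exchange property. -/
theorem exists_wordProd_mul_eq_of_inversionParity_eq_one {ω : List B} {t : W}
    (ht : cs.IsReflection t) (h : cs.inversionParity (cs.wordProd ω) t = 1) :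
    ∃ ω₁ i ω₂, ω = ω₁ ++ i :: ω₂ ∧ cs.wordProd ω * t = cs.wordProd (ω₁ ++ ω₂) := by
  obtain ⟨L₁, a, L₂, hL, hprod⟩ := cs.exists_prod_mul_eq_of_inversionParity_eq_one
    (R := {t | cs.IsReflection t}) (L := ω.map cs.simple) (fun a ha => ha.mul_self)
    (fun a ha b hb => by simpa [ha.inv] using hb.conj a)
    (by
      intro a ha
      obtain ⟨i, -, rfl⟩ := List.mem_map.1 ha
      refine ⟨cs.isReflection_simple i, fun b _ hb => ?_⟩
      by_contra hne
      rw [inversionParity_simple, if_neg hne] at hb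
      exact zero_ne_one hb) ht h
  obtain ⟨ω₁, ω', rfl, rfl, hω'⟩ := List.map_eq_append_iff.1 hL
  obtain ⟨i, ω₂, rfl, rfl, rfl⟩ := List.map_eq_cons_iff.1 hω'
  exact ⟨ω₁, i, ω₂, rfl, by simpa [wordProd] using hprod⟩

variable {cs} in
theorem IsReflection.inversionParity_eq_one_iff {t : W} (ht : cs.IsReflection t) (w : W) :
    cs.inversionParity w t = 1 ↔ cs.length (w * t) < cs.length w := by
  have key (w : W) (h : cs.inversionParity w t = 1) : cs.length (w * t) < cs.length w := by
    obtain ⟨ω, hω, rfl⟩ := cs.exists_isReduced w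
    obtain ⟨ω₁, i, ω₂, rfl, h'⟩ := cs.exists_wordProd_mul_eq_of_inversionParity_eq_one ht h
    rw [h', hω.eq]
    refine (cs.length_wordProd_le _).trans_lt ?_
    simp
  refine ⟨key w, fun h => ?_⟩
  by_contra hne
  have h1 : cs.inversionParity (w * t) t = 1 := by
    rw [inversionParity_mul, ht.inversionParity_self, mul_inv_cancel_right]
    generalize cs.inversionParity w t = z at hne
    revert z; decide
  have h2 := key _ h1
  rw [mul_assoc, ht.mul_self, mul_one] at h2
  omega

end CoxeterSystem

namespace CoxeterSystem

variable {B W : Type*} [Group W] {M : CoxeterMatrix B} (cs : CoxeterSystem M W)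

/-- The canonical generators (in the sense of Dyer) of the subgroup generated by a set `R` of
reflections: the elements of `R` having no inversions in `R` but themselves. -/
def canonicalGenerators (R : Set W) : Set W :=
  {a ∈ R | ∀ b ∈ R, cs.inversionParity a b = 1 → b = a}

theorem simple_mem_canonicalGenerators {R : Set W} {i : B} (h : cs.simple i ∈ R) :
    cs.simple i ∈ cs.canonicalGenerators R := by
  refine ⟨h, fun b _ hb => ?_⟩
  by_contra hne
  rw [inversionParity_simple, if_neg hne] at hb
  exact zero_ne_one hb

theorem wordProd_conj_mem_closure_canonicalGenerators (ω : List B) (i : B) {R : Set W}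
    (hsq : ∀ a ∈ R, a * a = 1) (hR : ∀ a ∈ R, ∀ b ∈ R, a * b * a ∈ R)
    (h : cs.wordProd ω * cs.simple i * (cs.wordProd ω)⁻¹ ∈ R) :
    cs.wordProd ω * cs.simple i * (cs.wordProd ω)⁻¹ ∈
      Submonoid.closure (cs.canonicalGenerators R) := by
  induction ω generalizing R with
  | nil =>
    simp only [wordProd_nil, one_mul, inv_one, mul_one] at h ⊢
    exact Submonoid.subset_closure (cs.simple_mem_canonicalGenerators h)
  | cons j ω ih =>
    set t := cs.wordProd ω * cs.simple i * (cs.wordProd ω)⁻¹ with ht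
    set s := cs.simple j with hs
    have hss : s * s = 1 := cs.simple_mul_simple_self j
    have hss' (x : W) : s * (s * x) = x := cs.simple_mul_simple_cancel_left j
    have e : cs.wordProd (j :: ω) * cs.simple i * (cs.wordProd (j :: ω))⁻¹ = s * t * s := by
      simp [wordProd_cons, ht, hs, mul_assoc]
    rw [e] at h ⊢
    by_cases hsR : s ∈ R
    · have htR : t ∈ R := by simpa [mul_assoc, hss, hss'] using hR s hsR _ h
      have hsm := Submonoid.subset_closure (cs.simple_mem_canonicalGenerators hsR)
      exact mul_mem (mul_mem hsm (ih hsq hR htR)) hsm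
    · set R' : Set W := {b | s * b * s ∈ R} with hR'
      have hsq' (a : W) (ha : a ∈ R') : a * a = 1 := by
        have h1 := congrArg (fun x => s * x * s) (hsq _ ha)
        simpa [mul_assoc, hss, hss'] using h1
      have hconj' (a : W) (ha : a ∈ R') (b : W) (hb : b ∈ R') : a * b * a ∈ R' := by
        have h1 := hR _ ha _ hb
        simpa [hR', mul_assoc, hss, hss'] using h1
      have hgen (a : W) (ha : a ∈ cs.canonicalGenerators R') :
          s * a * s ∈ cs.canonicalGenerators R := by
        refine ⟨ha.1, fun r hr hr1 => ?_⟩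
        have hb : s * r * s ∈ R' := by simpa [hR', mul_assoc, hss, hss'] using hr
        have hinv : a⁻¹ = a := inv_eq_of_mul_eq_one_left (hsq' a ha.1)
        have h1 : r ≠ s := fun h => hsR (h ▸ hr)
        have h2 : a * (s * r * s) * a ≠ s := by
          intro h
          have h3 : s * (a * (s * r * s) * a) * s ∈ R := hconj' a ha.1 _ hb
          rw [h, hss, one_mul] at h3
          exact hsR h3
        rw [inversionParity_mul, inversionParity_mul, cs.inv_simple j, hinv,
          inversionParity_simple, inversionParity_simple, if_neg h1, if_neg h2, zero_add,
          add_zero] at hr1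
        have h3 := ha.2 _ hb hr1
        rw [← h3]
        simp [mul_assoc, hss, hss']
      have hclosure (x : W) (hx : x ∈ Submonoid.closure (cs.canonicalGenerators R')) :
          s * x * s ∈ Submonoid.closure (cs.canonicalGenerators R) := by
        induction hx using Submonoid.closure_induction with
        | mem a ha => exact Submonoid.subset_closure (hgen a ha)
        | one => simp [hss]
        | mul x y _ _ hx hy => simpa [mul_assoc, hss'] using mul_mem hx hy
      exact hclosure t (ih hsq' hconj' h)

theorem subset_closure_canonicalGenerators {R : Set W} (hrefl : ∀ a ∈ R, cs.IsReflection a)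
    (hR : ∀ a ∈ R, ∀ b ∈ R, a * b * a ∈ R) :
    R ⊆ Submonoid.closure (cs.canonicalGenerators R) := by
  intro t ht
  obtain ⟨w, i, rfl⟩ := hrefl t ht
  obtain ⟨ω, rfl⟩ := cs.wordProd_surjective w
  exact cs.wordProd_conj_mem_closure_canonicalGenerators ω i
    (fun a ha => (hrefl a ha).mul_self) hR ht

/-- An element of a reflection subgroup without inversions in this subgroup is trivial. -/
theorem eq_one_of_mem_closure_of_inversionParity_eq_zero {R : Set W}
    (hrefl : ∀ a ∈ R, cs.IsReflection a) (hR : ∀ a ∈ R, ∀ b ∈ R, a * b * a ∈ R) {q : W}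
    (hq : q ∈ Submonoid.closure R) (h : ∀ r ∈ R, cs.inversionParity q r = 0) : q = 1 := by
  have key (n : ℕ) (L : List W) (hn : L.length ≤ n) (hL : ∀ a ∈ L, a ∈ cs.canonicalGenerators R)
      (h : ∀ r ∈ R, cs.inversionParity L.prod r = 0) : L.prod = 1 := by
    induction n generalizing L with
    | zero => simp [List.eq_nil_of_length_eq_zero (Nat.le_zero.1 hn)]
    | succ n ih =>
      obtain rfl | ⟨L, r, rfl⟩ := L.eq_nil_or_concat'
      · simp
      have hr := hL r (by simp)
      have hrr := hrefl r hr.1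
      have h1 := h r hr.1
      rw [List.prod_append, List.prod_singleton, inversionParity_mul, hrr.inversionParity_self,
        mul_inv_cancel_right] at h1
      have h2 : cs.inversionParity L.prod r = 1 := by
        generalize cs.inversionParity L.prod r = z at h1
        revert z; decide
      obtain ⟨L₁, a, L₂, rfl, h3⟩ := cs.exists_prod_mul_eq_of_inversionParity_eq_one
        (fun a ha => (hrefl a ha).mul_self) hR
        (fun a ha => hL a (List.mem_append_left _ ha)) hr.1 h2
      rw [List.prod_append, List.prod_singleton, h3] at h ⊢
      refine ih _ ?_ (fun a ha => hL a ?_) h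
      · simp at hn ⊢; omega
      · simp at ha ⊢; tauto
  have hq' : q ∈ Submonoid.closure (cs.canonicalGenerators R) :=
    Submonoid.closure_le.2 (cs.subset_closure_canonicalGenerators hrefl hR) hq
  obtain ⟨L, hL, rfl⟩ := Submonoid.exists_list_of_mem_closure hq'
  exact key _ L le_rfl hL h

end CoxeterSystem

namespace HurwitzMove

open Relation

variable {W : Type*} [Group W]

theorem append {l l' : List W} (h : HurwitzMove l l') (u v : List W) :
    HurwitzMove (u ++ l ++ v) (u ++ l' ++ v) := by
  obtain ⟨l₁, l₂, a, b, rfl, rfl⟩ := h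
  exact ⟨u ++ l₁, l₂ ++ v, a, b, by simp, by simp⟩

theorem eqvGen_append {l l' : List W} (h : EqvGen HurwitzMove l l') (u v : List W) :
    EqvGen HurwitzMove (u ++ l ++ v) (u ++ l' ++ v) := by
  induction h with
  | rel _ _ h => exact .rel _ _ (h.append u v)
  | refl => exact .refl _
  | symm _ _ _ ih => exact ih.symm
  | trans _ _ _ _ _ ih₁ ih₂ => exact ih₁.trans _ _ _ ih₂

theorem eqvGen_length_eq {l l' : List W} (h : EqvGen HurwitzMove l l') :
    l.length = l'.length := by
  induction h with
  | rel _ _ h =>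
    obtain ⟨l₁, l₂, a, b, rfl, rfl⟩ := h
    simp
  | refl => rfl
  | symm _ _ _ ih => exact ih.symm
  | trans _ _ _ _ _ ih₁ ih₂ => exact ih₁.trans ih₂

/-- Moving a letter to the left end of a list of involutions. -/
theorem eqvGen_append_conj_prod {L : List W} (hL : ∀ b ∈ L, b * b = 1) (a : W) :
    EqvGen HurwitzMove (L ++ [L.prod⁻¹ * a * L.prod]) (a :: L) := by
  induction L generalizing a with
  | nil => simpa using EqvGen.refl _
  | cons b L ih =>
    have hb : b * b = 1 := hL b (by simp)
    have hinv : b⁻¹ = b := inv_eq_of_mul_eq_one_left hb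
    have h1 := eqvGen_append (ih (fun c hc => hL c (by simp [hc])) (b * a * b)) [b] []
    have h2 : HurwitzMove (b :: (b * a * b) :: L) (a :: b :: L) := by
      refine ⟨[], L, b, b * a * b, by simp, ?_⟩
      have : b * (b * a * b) * b = a := by
        rw [mul_assoc, mul_assoc, mul_assoc, hb, mul_one, ← mul_assoc, hb, one_mul]
      simp [this]
    refine EqvGen.trans _ _ _ ?_ (.rel _ _ h2)
    simpa [hinv, mul_assoc] using h1

theorem mul_zpow_mul_eq {a b : W} (ha : a * a = 1) (hb : b * b = 1) (k : ℤ) :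
    a * (a * b) ^ k * a = (a * b) ^ (-k) := by
  have hinv : a⁻¹ = a := inv_eq_of_mul_eq_one_left ha
  have hinv' : b⁻¹ = b := inv_eq_of_mul_eq_one_left hb
  have h := conj_zpow (a := a) (b := a * b) (i := k)
  have e : a * (a * b) * a⁻¹ = (a * b)⁻¹ := by
    simp [hinv, hinv', ← mul_assoc, ha]
  rw [e, hinv] at h
  rw [← h, zpow_neg, inv_zpow]

theorem eqvGen_pair_zpow {a b : W} (ha : a * a = 1) (hb : b * b = 1) (k : ℤ) :
    EqvGen HurwitzMove [a, b] [(a * b) ^ k * a, (a * b) ^ (k - 1) * a] := by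
  have step (k : ℤ) : HurwitzMove [(a * b) ^ k * a, (a * b) ^ (k - 1) * a]
      [(a * b) ^ (k + 1) * a, (a * b) ^ k * a] := by
    refine ⟨[], [], _, _, rfl, ?_⟩
    have h : (a * b) ^ k * a * ((a * b) ^ (k - 1) * a) = a * b := by
      rw [mul_assoc, ← mul_assoc a, mul_zpow_mul_eq ha hb, ← zpow_add]
      simp
    simp [h, zpow_add_one, (Commute.refl (a * b)).zpow_left k |>.eq, mul_assoc]
  induction k with
  | zero =>
    have e : b⁻¹ * a⁻¹ * a = b := by
      rw [inv_mul_cancel_right, inv_eq_of_mul_eq_one_left hb]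
    simpa [e] using EqvGen.refl [a, b]
  | succ n ih =>
    refine ih.trans _ _ _ (.rel _ _ ?_)
    simpa using step n
  | pred n ih =>
    refine ih.trans _ _ _ (EqvGen.symm _ _ (.rel _ _ ?_))
    simpa using step (-n - 1)

variable {B : Type*} {M : CoxeterMatrix B} {cs : CoxeterSystem M W}

theorem eqvGen_forall_isReflection_iff {l l' : List W} (h : EqvGen HurwitzMove l l') :
    (∀ t ∈ l, cs.IsReflection t) ↔ ∀ t ∈ l', cs.IsReflection t := by
  induction h with
  | rel _ _ h =>
    obtain ⟨l₁, l₂, a, b, rfl, rfl⟩ := h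
    have (ha : cs.IsReflection a) : cs.IsReflection (a * b * a) ↔ cs.IsReflection b := by
      simpa [ha.inv] using cs.isReflection_conj_iff a b
    simp only [List.mem_append, List.mem_cons, or_imp, forall_and, forall_eq]
    tauto
  | refl => rfl
  | symm _ _ _ ih => exact ih.symm
  | trans _ _ _ _ _ ih₁ ih₂ => exact ih₁.trans ih₂

theorem eqvGen_prod_eq {l l' : List W} (h : EqvGen HurwitzMove l l')
    (hl : ∀ t ∈ l, cs.IsReflection t) : l.prod = l'.prod := by
  induction h with
  | rel _ _ h =>
    obtain ⟨l₁, l₂, a, b, rfl, rfl⟩ := h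
    have ha := (hl a (by simp)).mul_self
    simp [mul_assoc, ← mul_assoc a a, ha]
  | refl => rfl
  | symm _ _ h ih => exact (ih ((eqvGen_forall_isReflection_iff h).2 hl)).symm
  | trans _ _ _ h _ ih₁ ih₂ =>
    exact (ih₁ hl).trans (ih₂ ((eqvGen_forall_isReflection_iff h).1 hl))

/-- Two distinct reflections, multiplied in turn to the right of `x`, first going up and then down
in length, may be replaced within their Hurwitz orbit so as to lower the intermediate length. -/
theorem exists_eqvGen_pair_length_lt {x a b : W} (ha : cs.IsReflection a)
    (hb : cs.IsReflection b) (hab : a ≠ b) (hup : cs.length x < cs.length (x * a))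
    (hdown : cs.length (x * a * b) < cs.length (x * a)) :
    ∃ r r', EqvGen HurwitzMove [a, b] [r, r'] ∧ cs.length (x * r) < cs.length (x * a) := by
  by_contra! hmin
  have haa := ha.mul_self
  have hbb := hb.mul_self
  set p := a * b with hp
  set R : Set W := Set.range fun k : ℤ => p ^ k * a
  have horbit (k : ℤ) := eqvGen_pair_zpow haa hbb k
  have hrefl : ∀ r ∈ R, cs.IsReflection r := by
    rintro _ ⟨k, rfl⟩
    exact (eqvGen_forall_isReflection_iff (horbit k)).1 (by simp [ha, hb]) _ (by simp [hp])
  have hlen (k : ℤ) : cs.length (x * a) ≤ cs.length (x * (p ^ k * a)) := hmin _ _ (horbit k)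
  have hmul (k l : ℤ) : p ^ k * a * (p ^ l * a) = p ^ (k - l) := by
    rw [mul_assoc, ← mul_assoc a, mul_zpow_mul_eq haa hbb, ← hp, ← zpow_add, sub_eq_add_neg]
  have hconj : ∀ r ∈ R, ∀ r' ∈ R, r * r' * r ∈ R := by
    rintro _ ⟨k, rfl⟩ _ ⟨l, rfl⟩
    refine ⟨k - l + k, ?_⟩
    simp only
    rw [hmul, zpow_add _ (k - l), mul_assoc]
  have hzero {w r : W} (hr : r ∈ R) (h : cs.length w < cs.length (w * r)) :
      cs.inversionParity w r = 0 := by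
    have h1 : ¬ cs.inversionParity w r = 1 := by
      rw [(hrefl r hr).inversionParity_eq_one_iff]
      omega
    generalize cs.inversionParity w r = z at h1
    revert z; decide
  have haR : a ∈ R := ⟨0, by simp⟩
  have hbR : b ∈ R := ⟨-1, by
    simp only [zpow_neg_one, hp, mul_inv_rev, inv_mul_cancel_right, hb.inv]⟩
  have hp1 : p = 1 := by
    refine cs.eq_one_of_mem_closure_of_inversionParity_eq_zero hrefl hconj
      (mul_mem (Submonoid.subset_closure haR) (Submonoid.subset_closure hbR)) ?_
    rintro _ ⟨k, rfl⟩
    have h1 : cs.inversionParity (x * p) (p ^ k * a) = 0 := by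
      refine hzero ⟨k, rfl⟩ ?_
      have h2 := hlen (1 + k)
      rw [zpow_add, zpow_one] at h2
      simp only [hp, mul_assoc] at h2 hdown ⊢
      omega
    have h2 : p * (p ^ k * a) * p⁻¹ ∈ R := by
      refine ⟨k + 2, ?_⟩
      simp only
      have h3 : a * p⁻¹ = p * a := by
        rw [hp, mul_inv_rev, ha.inv, hb.inv, mul_assoc]
      rw [mul_assoc p, mul_assoc (p ^ k), h3, ← mul_assoc (p ^ k), ← zpow_add_one,
        ← mul_assoc p, ← zpow_one_add]
      congr 2
      ring
    have h4 : cs.inversionParity x (p * (p ^ k * a) * p⁻¹) = 0 := by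
      refine hzero h2 ?_
      obtain ⟨l, hl⟩ := h2
      simp only at hl
      rw [← hl]
      exact hup.trans_le (hlen l)
    rwa [cs.inversionParity_mul, h4, add_zero] at h1
  exact hab (by rw [← hb.inv]; exact eq_inv_of_mul_eq_one_left hp1)

/-- A nonempty list of reflections is Hurwitz equivalent to one with two equal adjacent letters, or
to one whose last letter increases the length. -/
theorem exists_eqvGen_append (n : ℕ) {l : List W} {t : W} (hn : l.length = n)
    (h : ∀ r ∈ l ++ [t], cs.IsReflection r) :
    (∃ l₁ a l₂, EqvGen HurwitzMove (l ++ [t]) (l₁ ++ [a, a] ++ l₂)) ∨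
      ∃ l' t', EqvGen HurwitzMove (l ++ [t]) (l' ++ [t']) ∧
        cs.length l'.prod < cs.length (l'.prod * t') := by
  induction n generalizing l t with
  | zero =>
    obtain rfl := List.eq_nil_of_length_eq_zero hn
    refine .inr ⟨[], t, .refl _, ?_⟩
    have := (h t (by simp)).odd_length.pos
    simpa using this
  | succ n ihn =>
    induction hN : cs.length l.prod using Nat.strong_induction_on generalizing l t with
    | _ N ihN =>
      subst hN
      have ht : cs.IsReflection t := h t (by simp)
      obtain hlt | hlt := (ht.length_mul_left_ne l.prod).lt_or_gt
      swap
      · exact .inr ⟨l, t, .refl _, hlt⟩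
      obtain rfl | ⟨k, u, rfl⟩ := l.eq_nil_or_concat'
      · simp at hn
      have hku : ∀ r ∈ k ++ [u], cs.IsReflection r := fun r hr => h r (List.mem_append_left _ hr)
      obtain ⟨l₁, a, l₂, he⟩ | ⟨k', u', he, hlen⟩ := ihn (by simpa using hn) hku
      · refine .inl ⟨l₁, a, l₂ ++ [t], ?_⟩
        simpa using eqvGen_append he [] [t]
      have hku' := (eqvGen_forall_isReflection_iff he).1 hku
      have hprod := eqvGen_prod_eq he hku
      have he' : EqvGen HurwitzMove (k ++ [u] ++ [t]) (k' ++ [u', t]) := by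
        simpa using eqvGen_append he [] [t]
      obtain rfl | hne := eq_or_ne u' t
      · exact .inl ⟨k', u', [], by simpa using he'⟩
      rw [hprod, List.prod_append, List.prod_singleton] at hlt
      obtain ⟨r, r', hr, hrlt⟩ :=
        exists_eqvGen_pair_length_lt (hku' u' (by simp)) ht hne hlen hlt
      have he'' : EqvGen HurwitzMove (k ++ [u] ++ [t]) (k' ++ [r] ++ [r']) := by
        refine he'.trans _ _ _ ?_
        simpa using eqvGen_append hr k' []
      have hlen' := eqvGen_length_eq he''
      obtain ⟨l₁, a, l₂, hf⟩ | ⟨l', t', hf, hl'⟩ := ihN _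
        (by simpa [hprod] using hrlt) (l := k' ++ [r]) (t := r') (by simp at hn hlen' ⊢; omega)
        ((eqvGen_forall_isReflection_iff he'').1 h) rfl
      · exact .inl ⟨l₁, a, l₂, he''.trans _ _ _ hf⟩
      · exact .inr ⟨l', t', he''.trans _ _ _ hf, hl'⟩

/-- Every factorization of a product of `n` distinct simple reflections into at most `n`
reflections is Hurwitz equivalent to the given one. -/
theorem eqvGen_map_simple {l : List W} {ω : List B} (hω : ω.Nodup) (hlen : l.length ≤ ω.length)
    (hl : ∀ t ∈ l, cs.IsReflection t) (hprod : l.prod = cs.wordProd ω) :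
    EqvGen HurwitzMove l (ω.map cs.simple) := by
  induction hn : l.length using Nat.strong_induction_on generalizing l ω with
  | _ n ih =>
    subst hn
    obtain rfl | ⟨k, t, rfl⟩ := l.eq_nil_or_concat'
    · obtain rfl | hne := eq_or_ne ω []
      · exact .refl _
      · exact absurd hprod.symm (cs.wordProd_ne_one_of_nodup hω hne)
    obtain ⟨l₁, a, l₂, he⟩ | ⟨l', t', he, hlt⟩ := exists_eqvGen_append _ rfl hl
    · have hl' := (eqvGen_forall_isReflection_iff he).1 hl
      have hlen' := eqvGen_length_eq he
      have h := ih (l₁ ++ l₂).length (by rw [hlen']; simp) (l := l₁ ++ l₂) hω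
        (by rw [hlen'] at hlen; simp at hlen ⊢; omega)
        (fun r hr => hl' r (by simp at hr ⊢; tauto))
        (by
          rw [← hprod, eqvGen_prod_eq he hl]
          simp [← mul_assoc a a, (hl' a (by simp)).mul_self]) rfl
      have h' := eqvGen_length_eq h
      rw [hlen'] at hlen
      simp at h' hlen
      omega
    · have hl' := (eqvGen_forall_isReflection_iff he).1 hl
      have hlen' := eqvGen_length_eq he
      have hp : l'.prod * t' = cs.wordProd ω := by
        rw [← hprod, eqvGen_prod_eq he hl, List.prod_append, List.prod_singleton]
      have ht' : cs.IsReflection t' := hl' t' (by simp)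
      have hp' : l'.prod = cs.wordProd ω * t' := by rw [← hp, mul_assoc, ht'.mul_self, mul_one]
      rw [hp, hp'] at hlt
      obtain ⟨ω₁, i, ω₂, rfl, hdel⟩ := cs.exists_wordProd_mul_eq_of_inversionParity_eq_one ht'
        ((ht'.inversionParity_eq_one_iff _).2 hlt)
      rw [hlen'] at hlen
      have h := ih l'.length (by rw [hlen']; simp) (l := l') (ω := ω₁ ++ ω₂)
        (hω.sublist (by simp)) (by simp at hlen ⊢; omega) (fun r hr => hl' r (by simp [hr]))
        (hp'.trans hdel) rfl
      have ht'eq : t' = (cs.wordProd ω₂)⁻¹ * cs.simple i * cs.wordProd ω₂ := by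
        have h1 : t' = (cs.wordProd (ω₁ ++ i :: ω₂))⁻¹ * cs.wordProd (ω₁ ++ ω₂) := by
          rw [← hdel, inv_mul_cancel_left]
        rw [h1]
        simp [cs.wordProd_append, cs.wordProd_cons, mul_assoc]
      have hshift : EqvGen HurwitzMove (ω₂.map cs.simple ++ [t'])
          (cs.simple i :: ω₂.map cs.simple) := by
        rw [ht'eq]
        refine eqvGen_append_conj_prod (fun b hb => ?_) _
        obtain ⟨j, -, rfl⟩ := List.mem_map.1 hb
        exact cs.simple_mul_simple_self j
      refine he.trans _ _ _ ((eqvGen_append h [] [t']).trans _ _ _ ?_)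
      simpa using eqvGen_append hshift (ω₁.map cs.simple) []

end HurwitzMove

/-- Let `(W,T)` be a dual Coxeter system of finite rank `m`
(witnessed by a Coxeter system `cs` indexed by `Fin m` whose set of reflections is `T`),
and let `c = s₁ ⋯ sₙ` be a parabolic Coxeter element (the product of the first `n ≤ m`
simple generators of `cs`).  Then the Hurwitz action of the braid group `Bₙ` on
`Red_T(c)` is transitive: every tuple `(t₁, …, tₙ) ∈ Tⁿ` with `c = t₁ ⋯ tₙ` is connected
to `(s₁, …, sₙ)` by a sequence of Hurwitz moves and their inverses. -/
theorem hurwitz_transitive_on_parabolic_coxeter_element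
    {W : Type*} [Group W] (T : Set W) (m n : ℕ) (hmn : n ≤ m)
    (M : CoxeterMatrix (Fin m)) (cs : CoxeterSystem M W)
    (hT : {t | cs.IsReflection t} = T)
    (c : W) (hc : c = (List.ofFn fun i : Fin n => cs.simple (Fin.castLE hmn i)).prod)
    (l : List W) (hlen : l.length = n) (hmem : ∀ t ∈ l, t ∈ T) (hprod : l.prod = c) :
    Relation.EqvGen HurwitzMove l
      (List.ofFn fun i : Fin n => cs.simple (Fin.castLE hmn i)) := by
  subst hT hc
  have h := HurwitzMove.eqvGen_map_simple (cs := cs) (ω := List.ofFn (Fin.castLE hmn))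
    (List.nodup_ofFn.2 (Fin.castLE_injective hmn)) (by simp [hlen]) hmem
    (by rw [hprod, CoxeterSystem.wordProd, List.map_ofFn]; rfl)
  rwa [List.map_ofFn] at h
end

section
/- Let (W,S) be a Coxeter system of finite rank with reflection set T. An element w ∈ W is a standard parabolic Coxeter element for (W,S) (i.e., w is a product of pairwise distinct simple generators, each occurring exactly once) if and only if ℓ_T(w) = ℓ(w), where ℓ is the length function with respect to S and ℓ_T is the length function with respect to T. -/
/-- The reflection length `ℓ_T` of `w`: the minimal length of a factorization of `w`
into reflections. -/
noncomputable def reflLength {B : Type*} {W : Type*} [Group W] {M : CoxeterMatrix B}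
    (cs : CoxeterSystem M W) (w : W) : ℕ :=
  sInf {n | ∃ l : List W, (∀ t ∈ l, cs.IsReflection t) ∧ l.prod = w ∧ l.length = n}

open Module Polynomial.Chebyshev in
/-- Two reflections whose pairings are both `-2 cos (π / m)` satisfy the braid relation of
order `m`. -/
theorem Module.reflection_mul_reflection_pow_eq_one_of_cos {V : Type*} [AddCommGroup V]
    [Module ℝ V] {x y : V} {f g : Dual ℝ V} (hf : f x = 2) (hg : g y = 2) {m : ℕ} (hm : 2 ≤ m)
    (hfy : f y = -2 * Real.cos (Real.pi / m)) (hgx : g x = -2 * Real.cos (Real.pi / m)) :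
    (reflection hf * reflection hg) ^ m = 1 := by
  obtain rfl | hm3 : m = 2 ∨ 3 ≤ m := by omega
  · have hfy0 : f y = 0 := by simpa using hfy
    have hgx0 : g x = 0 := by simpa using hgx
    ext z
    simp only [pow_two, LinearEquiv.mul_apply, reflection_apply, map_sub, map_smul, hf, hg, hfy0,
      hgx0, LinearEquiv.coe_one, id_eq]
    module
  have hm0 : (0 : ℝ) < m := by positivity
  set θ : ℝ := 2 * Real.pi / m with hθ
  have ht : 2 * Real.cos θ = f y * g x - 2 := by
    rw [hfy, hgx, hθ, mul_div_assoc, Real.cos_two_mul]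
    ring
  have hsin : Real.sin θ ≠ 0 := by
    refine (Real.sin_pos_of_pos_of_lt_pi (by positivity) ?_).ne'
    have : (3 : ℝ) ≤ m := by exact_mod_cast hm3
    rw [hθ, div_lt_iff₀ hm0]
    nlinarith [Real.pi_pos]
  obtain ⟨k, rfl | rfl⟩ := m.even_or_odd'
  · have hS : (S ℝ ((k : ℤ) - 1)).eval (2 * Real.cos θ) = 0 := by
      apply (mul_eq_zero.mp _).resolve_right hsin
      rw [S_two_mul_real_cos]
      push_cast at hθ hm0 ⊢
      have : ((k : ℝ) - 1 + 1) * θ = Real.pi := by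
        rw [hθ]
        have : (k : ℝ) ≠ 0 := by rintro h; simp [h] at hm0
        field_simp
        ring
      rw [this, Real.sin_pi]
    ext z
    rw [reflection_mul_reflection_pow_apply hf hg (2 * k) z _ ht]
    have h₁ : (((2 * k : ℕ) : ℤ) - 2) / 2 = k - 1 := by omega
    have h₂ : (((2 * k : ℕ) : ℤ) - 1) / 2 = k - 1 := by omega
    rw [h₁, h₂, hS]
    simp
  · have hS : (S ℝ (k : ℤ)).eval (2 * Real.cos θ) +
        (S ℝ ((k : ℤ) - 1)).eval (2 * Real.cos θ) = 0 := by
      apply (mul_eq_zero.mp _).resolve_right hsin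
      rw [add_mul, S_two_mul_real_cos, S_two_mul_real_cos]
      push_cast at hθ hm0 ⊢
      have : ((k : ℝ) + 1) * θ = 2 * Real.pi - ((k : ℝ) - 1 + 1) * θ := by
        rw [hθ]
        field_simp
        ring
      rw [this, Real.sin_two_pi_sub]
      ring
    ext z
    rw [reflection_mul_reflection_pow_apply hf hg (2 * k + 1) z _ ht]
    have h₁ : (((2 * k + 1 : ℕ) : ℤ) - 1) / 2 = k := by omega
    have h₂ : (((2 * k + 1 : ℕ) : ℤ) - 3) / 2 = k - 1 := by omega
    have h₃ : ((2 * k + 1 : ℕ) : ℤ) / 2 = k := by omega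
    have h₄ : (((2 * k + 1 : ℕ) : ℤ) - 2) / 2 = k - 1 := by omega
    rw [h₁, h₂, h₃, h₄, hS]
    simp

namespace CoxeterMatrix

open Module

variable {B : Type*} [DecidableEq B]

/-- The simple root `α i` in the realization `(B → ℝ) × (B → ℝ)` of `M`. -/
def realizationRoot (i : B) : (B → ℝ) × (B → ℝ) := (Pi.single i 1, 0)

theorem linearIndependent_realizationRoot :
    LinearIndependent ℝ (realizationRoot : B → (B → ℝ) × (B → ℝ)) :=
  (Pi.linearIndependent_single_one B ℝ).map' (LinearMap.inl ℝ (B → ℝ) (B → ℝ))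
    (LinearMap.ker_eq_bot.mpr LinearMap.inl_injective)

variable [Fintype B] (M : CoxeterMatrix B)

/-- The simple coroot in the realization of `M`: it pairs with the `j`-th simple root to
`-2 cos (π / M i j)`, and the second factor makes the simple coroots linearly independent. -/
noncomputable def realizationCoroot (i : B) : Dual ℝ ((B → ℝ) × (B → ℝ)) :=
  (∑ j, (-2 * Real.cos (Real.pi / M i j)) • LinearMap.proj (R := ℝ) (φ := fun _ : B => ℝ) j).coprod
    (LinearMap.proj i)

theorem realizationCoroot_root (i j : B) :
    M.realizationCoroot i (realizationRoot j) = -2 * Real.cos (Real.pi / M i j) := by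
  simp [realizationCoroot, realizationRoot, Pi.single_apply]

theorem realizationCoroot_root_self (i : B) :
    M.realizationCoroot i (realizationRoot i) = 2 := by
  simp [realizationCoroot_root]

theorem realizationCoroot_single (i j : B) :
    M.realizationCoroot i (0, Pi.single j 1) = if i = j then 1 else 0 := by
  simp [realizationCoroot, Pi.single_apply]

/-- The reflection by which the `i`-th simple generator acts on the realization. -/
noncomputable def realizationReflection (i : B) :
    ((B → ℝ) × (B → ℝ)) ≃ₗ[ℝ] ((B → ℝ) × (B → ℝ)) :=
  reflection (M.realizationCoroot_root_self i)

theorem isLiftable_realizationReflection : M.IsLiftable M.realizationReflection := by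
  intro i j
  obtain rfl | hij := eq_or_ne i j
  · rw [M.diagonal, pow_one]
    ext1 v
    exact involutive_reflection _ v
  obtain h0 | h0 := Nat.eq_zero_or_pos (M i j)
  · rw [h0, pow_zero]
  have h1 := M.off_diagonal i j hij
  exact reflection_mul_reflection_pow_eq_one_of_cos _ _ (by omega)
    (M.realizationCoroot_root i j) (by rw [M.realizationCoroot_root, M.symmetric])

end CoxeterMatrix

namespace CoxeterSystem

open Module CoxeterMatrix

variable {B W : Type*} [Group W] {M : CoxeterMatrix B} (cs : CoxeterSystem M W)

section Realization

variable [Fintype B] [DecidableEq B]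

/-- The action of `W` on the realization of its Coxeter matrix. -/
noncomputable def realization : W →* ((B → ℝ) × (B → ℝ)) ≃ₗ[ℝ] ((B → ℝ) × (B → ℝ)) :=
  cs.lift ⟨M.realizationReflection, M.isLiftable_realizationReflection⟩

theorem realization_simple_apply (i : B) (v : (B → ℝ) × (B → ℝ)) :
    cs.realization (cs.simple i) v = v - M.realizationCoroot i v • realizationRoot i := by
  rw [realization, lift_apply_simple, realizationReflection, reflection_apply]

/-- The difference between the action of `w` on the realization and the identity. -/
noncomputable def displacement (w : W) : End ℝ ((B → ℝ) × (B → ℝ)) :=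
  (cs.realization w).toLinearMap - LinearMap.id

theorem displacement_apply (w : W) (v : (B → ℝ) × (B → ℝ)) :
    cs.displacement w v = cs.realization w v - v := rfl

theorem displacement_mul (u w : W) :
    cs.displacement (u * w) =
      cs.displacement u ∘ₗ (cs.realization w).toLinearMap + cs.displacement w := by
  refine LinearMap.ext fun v => ?_
  simp [displacement_apply]

theorem displacement_simple_mul_apply (i : B) (w : W) (v : (B → ℝ) × (B → ℝ)) :
    cs.displacement (cs.simple i * w) v =
      cs.displacement w v - M.realizationCoroot i (cs.realization w v) • realizationRoot i := by
  rw [displacement_apply, displacement_apply, map_mul, LinearEquiv.mul_apply,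
    realization_simple_apply]
  abel

theorem rank_displacement_le_one {t : W} (ht : cs.IsReflection t) :
    LinearMap.rank (cs.displacement t) ≤ 1 := by
  obtain ⟨w, i, rfl⟩ := ht
  have h : LinearMap.range (cs.displacement (w * cs.simple i * w⁻¹)) ≤
      Submodule.span ℝ {cs.realization w (realizationRoot i)} := by
    rintro _ ⟨v, rfl⟩
    rw [Submodule.mem_span_singleton]
    refine ⟨-M.realizationCoroot i (cs.realization w⁻¹ v), ?_⟩
    have hv : cs.realization w (cs.realization w⁻¹ v) = v := by
      rw [← LinearEquiv.mul_apply, ← map_mul, mul_inv_cancel, map_one, LinearEquiv.coe_one, id_eq]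
    rw [displacement_apply, map_mul, map_mul, LinearEquiv.mul_apply, LinearEquiv.mul_apply,
      realization_simple_apply, map_sub, map_smul, hv]
    module
  refine (Submodule.rank_mono h).trans ((rank_span_le _).trans ?_)
  simp

theorem rank_displacement_prod_le (l : List W) (hl : ∀ t ∈ l, cs.IsReflection t) :
    LinearMap.rank (cs.displacement l.prod) ≤ l.length := by
  induction l with
  | nil =>
    have : cs.displacement 1 = 0 := by
      refine LinearMap.ext fun v => ?_
      simp [displacement_apply]
    simp [this]
  | cons t l ih =>
    rw [List.forall_mem_cons] at hl
    rw [List.prod_cons, displacement_mul, List.length_cons, Nat.cast_succ, add_comm _ (1 : Cardinal)]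
    exact (LinearMap.rank_add_le _ _).trans (add_le_add
      ((LinearMap.rank_comp_le_left _ _).trans (cs.rank_displacement_le_one hl.1)) (ih hl.2))

theorem realization_wordProd_single {ω : List B} {i : B} (hi : i ∉ ω) :
    cs.realization (cs.wordProd ω) (0, Pi.single i 1) = (0, Pi.single i 1) := by
  induction ω with
  | nil => simp
  | cons j ω ih =>
    rw [List.mem_cons, not_or] at hi
    rw [wordProd_cons, map_mul, LinearEquiv.mul_apply, ih hi.2, realization_simple_apply,
      realizationCoroot_single, if_neg (Ne.symm hi.1), zero_smul, sub_zero]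

theorem realizationRoot_mem_range_displacement {ω : List B} (hω : ω.Nodup) {i : B} (hi : i ∈ ω) :
    realizationRoot i ∈ LinearMap.range (cs.displacement (cs.wordProd ω)) := by
  induction ω generalizing i with
  | nil => simp at hi
  | cons j ω ih =>
    rw [List.nodup_cons] at hω
    rw [wordProd_cons]
    have hj : realizationRoot j ∈
        LinearMap.range (cs.displacement (cs.simple j * cs.wordProd ω)) := by
      refine ⟨-(0, Pi.single j 1), ?_⟩
      rw [map_neg, displacement_simple_mul_apply, displacement_apply,
        realization_wordProd_single cs hω.1, realizationCoroot_single]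
      simp
    obtain rfl | hi := List.mem_cons.mp hi
    · exact hj
    obtain ⟨v, hv⟩ := ih hω.2 hi
    rw [← hv, ← sub_add_cancel (cs.displacement (cs.wordProd ω) v)
      (M.realizationCoroot j (cs.realization (cs.wordProd ω) v) • realizationRoot j),
      ← displacement_simple_mul_apply]
    exact add_mem (LinearMap.mem_range_self _ v) (Submodule.smul_mem _ _ hj)

theorem length_le_rank_displacement {ω : List B} (hω : ω.Nodup) :
    ω.length ≤ LinearMap.rank (cs.displacement (cs.wordProd ω)) := by
  have h : LinearIndependent ℝ fun k : Fin ω.length =>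
      (⟨realizationRoot (ω.get k),
        cs.realizationRoot_mem_range_displacement hω (ω.get_mem k)⟩ :
          LinearMap.range (cs.displacement (cs.wordProd ω))) :=
    LinearIndependent.of_comp (Submodule.subtype _)
      (linearIndependent_realizationRoot.comp ω.get (List.nodup_iff_injective_get.mp hω))
  simpa using h.cardinal_lift_le_rank

end Realization

theorem nodup_length_le_of_prod_eq [Finite B] {ω : List B} (hω : ω.Nodup) {l : List W}
    (hl : ∀ t ∈ l, cs.IsReflection t) (h : l.prod = cs.wordProd ω) : ω.length ≤ l.length := by
  classical
  have := Fintype.ofFinite B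
  have h₁ := cs.length_le_rank_displacement hω
  rw [← h] at h₁
  exact_mod_cast h₁.trans (cs.rank_displacement_prod_le l hl)

theorem isReflection_of_mem_map_simple {ω : List B} {t : W} (ht : t ∈ ω.map cs.simple) :
    cs.IsReflection t := by
  obtain ⟨i, -, rfl⟩ := List.mem_map.mp ht
  exact cs.isReflection_simple i

theorem reflLength_le {l : List W} (hl : ∀ t ∈ l, cs.IsReflection t) :
    reflLength cs l.prod ≤ l.length :=
  Nat.sInf_le ⟨l, hl, rfl, rfl⟩

theorem exists_reflLength_eq (w : W) :
    ∃ l : List W, (∀ t ∈ l, cs.IsReflection t) ∧ l.prod = w ∧ l.length = reflLength cs w := by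
  obtain ⟨ω, -, rfl⟩ := cs.exists_isReduced w
  exact Nat.sInf_mem (s := {n | ∃ l : List W, (∀ t ∈ l, cs.IsReflection t) ∧
    l.prod = cs.wordProd ω ∧ l.length = n})
    ⟨_, ω.map cs.simple, fun _ => cs.isReflection_of_mem_map_simple, rfl, rfl⟩

theorem reflLength_le_length (w : W) : reflLength cs w ≤ cs.length w := by
  obtain ⟨ω, hω, rfl⟩ := cs.exists_isReduced w
  rw [hω.eq, ← List.length_map (f := cs.simple)]
  exact cs.reflLength_le fun _ => cs.isReflection_of_mem_map_simple

/-- A factorization into reflections in which some reflection occurs twice can be shortened. -/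
theorem reflLength_prod_lt_of_not_nodup {l : List W} (hl : ∀ t ∈ l, cs.IsReflection t)
    (h : ¬l.Nodup) : reflLength cs l.prod < l.length := by
  obtain ⟨t, ht⟩ : ∃ t, List.Sublist [t, t] l := by
    simpa [List.nodup_iff_sublist] using h
  obtain ⟨a, l', rfl, hta, ht'⟩ := List.cons_sublist_iff.mp ht
  obtain ⟨a₁, a₂, rfl⟩ := List.append_of_mem hta
  obtain ⟨c₁, c₂, rfl⟩ := List.append_of_mem (List.singleton_sublist.mp ht')
  have htr : cs.IsReflection t := hl t (by simp)
  have hprod : (a₁ ++ (a₂ ++ c₁).map (MulAut.conj t) ++ c₂).prod =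
      (a₁ ++ t :: a₂ ++ (c₁ ++ t :: c₂)).prod := by
    rw [List.prod_append, List.prod_append, ← map_list_prod, MulAut.conj_apply, htr.inv]
    simp [mul_assoc]
  rw [← hprod]
  refine (cs.reflLength_le ?_).trans_lt (by simp)
  intro r hr
  simp only [List.mem_append, List.mem_map] at hr
  obtain (hr | ⟨r, hr, rfl⟩) | hr := hr
  · exact hl r (by simp [hr])
  · exact (hl r (by rcases hr with hr | hr <;> simp [hr])).conj t
  · exact hl r (by simp [hr])

theorem reflLength_wordProd_of_nodup [Finite B] {ω : List B} (hω : ω.Nodup) :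
    reflLength cs (cs.wordProd ω) = cs.length (cs.wordProd ω) := by
  obtain ⟨l, hl, hprod, hlen⟩ := cs.exists_reflLength_eq (cs.wordProd ω)
  refine (cs.reflLength_le_length _).antisymm ((cs.length_wordProd_le ω).trans ?_)
  exact hlen ▸ cs.nodup_length_le_of_prod_eq hω hl hprod

end CoxeterSystem

/-- Let `(W,S)` be a Coxeter system of finite rank.  An element
`w ∈ W` is a standard parabolic Coxeter element (a product of pairwise distinct simple
generators, each occurring exactly once) if and only if `ℓ_T(w) = ℓ(w)`, where `ℓ` is
the length with respect to `S` and `ℓ_T` the length with respect to the reflections. -/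
theorem standardParabolicCoxeterElement_iff_reflLength_eq_length
    {W : Type*} [Group W] {B : Type*} [Finite B]
    (M : CoxeterMatrix B) (cs : CoxeterSystem M W) (w : W) :
    (∃ l : List W, l.Nodup ∧ (∀ x ∈ l, x ∈ Set.range cs.simple) ∧ l.prod = w) ↔
      reflLength cs w = cs.length w := by
  constructor
  · rintro ⟨l, hl, hs, rfl⟩
    obtain ⟨ω, rfl⟩ : l ∈ Set.range (List.map cs.simple) := by
      rwa [Set.range_list_map]
    exact cs.reflLength_wordProd_of_nodup hl.of_map
  · intro h
    obtain ⟨ω, hω, rfl⟩ := cs.exists_isReduced w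
    refine ⟨ω.map cs.simple, ?_, ?_, rfl⟩
    · by_contra hn
      have hlt := cs.reflLength_prod_lt_of_not_nodup
        (fun _ => cs.isReflection_of_mem_map_simple) hn
      rw [List.length_map, ← hω.eq] at hlt
      exact hlt.ne h
    · intro x hx
      obtain ⟨i, -, rfl⟩ := List.mem_map.mp hx
      exact Set.mem_range_self i
end
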